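/- Equip ℤ^n with the lexicographic order. For every integral polytope P in ℝ^n, the set of extreme points of P is a nonempty finite subset of ℤ^n; let m(P) denote its lexicographically least element. Then for all integral polytopes P and Q in ℝ^n one has m(P + Q) = m(P) + m(Q), and m({h}) = h for every h ∈ ℤ^n. (This map yields the splitting of the exact sequence 0 → H → P_ℤ(H) → P_ℤ^Wh(H) → 0.) -/

import Mathlib

/-!
Order `ℝ^n` lexicographically too: it becomes a linearly ordered real vector space, in which the
least element of any set is an extreme point, because `Ici m \ {m} = Ioi m` is convex. The least
element of a finite set stays least in its convex hull, because `Ici m` is convex. Hence the least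
extreme point of an integral polytope is its least point, and least elements add under Minkowski
sums in any ordered group.
-/

open Pointwise

/-- The standard embedding `ℤ^n → ℝ^n`. -/
def embedR {n : ℕ} (z : Fin n → ℤ) : Fin n → ℝ := fun i => (z i : ℝ)

/-- An integral polytope in `ℝ^n`: the convex hull of a nonempty finite
subset of the lattice `ℤ^n ⊆ ℝ^n`. -/
def IsIntegralPolytope {n : ℕ} (P : Set (Fin n → ℝ)) : Prop :=
  ∃ S : Finset (Fin n → ℤ), S.Nonempty ∧
    P = convexHull ℝ (embedR '' (S : Set (Fin n → ℤ)))

/-- `v ∈ ℤ^n` is the lexicographically least extreme point of `P`. -/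
def IsLexMinExtreme {n : ℕ} (P : Set (Fin n → ℝ)) (v : Fin n → ℤ) : Prop :=
  embedR v ∈ Set.extremePoints ℝ P ∧
    ∀ w : Fin n → ℤ, embedR w ∈ Set.extremePoints ℝ P → toLex v ≤ toLex w

section Lex

variable {ι : Type*} [LinearOrder ι] {α β : ι → Type*}

theorem strictMono_toLex_piMap [∀ i, PartialOrder (α i)] [∀ i, PartialOrder (β i)]
    {f : ∀ i, α i → β i} (hf : ∀ i, StrictMono (f i)) :
    StrictMono fun x : Lex (∀ i, α i) ↦ toLex (Pi.map f (ofLex x)) := by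
  rintro x y ⟨i, heq, hlt⟩
  exact ⟨i, fun j hj ↦ congrArg (f j) (heq j hj), hf i hlt⟩

instance posSMulStrictMono_lex {𝕜 : Type*} [Zero 𝕜] [Preorder 𝕜] [∀ i, PartialOrder (α i)]
    [∀ i, SMul 𝕜 (α i)] [∀ i, PosSMulStrictMono 𝕜 (α i)] :
    PosSMulStrictMono 𝕜 (Lex (∀ i, α i)) where
  smul_lt_smul_of_pos_left _ ha _ _ h :=
    strictMono_toLex_piMap (fun _ ↦ strictMono_smul_left_of_pos ha) h

end Lex

theorem isLeast_add {M : Type*} [Add M] [Preorder M] [AddLeftMono M] [AddRightMono M]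
    {s t : Set M} {a b : M} (ha : IsLeast s a) (hb : IsLeast t b) : IsLeast (s + t) (a + b) :=
  ⟨Set.add_mem_add ha.1 hb.1, add_mem_lowerBounds_add ha.2 hb.2⟩

section OrderedModule

variable {𝕜 E : Type*}

theorem isLeast_convexHull [Semiring 𝕜] [PartialOrder 𝕜] [AddCommMonoid E] [PartialOrder E]
    [IsOrderedAddMonoid E] [Module 𝕜 E] [PosSMulMono 𝕜 E] {s : Set E} {m : E}
    (h : IsLeast s m) : IsLeast (convexHull 𝕜 s) m :=
  ⟨subset_convexHull 𝕜 s h.1, convexHull_min h.2 (convex_Ici m)⟩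

variable [Field 𝕜] [LinearOrder 𝕜] [IsStrictOrderedRing 𝕜] [AddCommGroup E] [PartialOrder E]
  [IsOrderedAddMonoid E] [Module 𝕜 E] [PosSMulStrictMono 𝕜 E]

theorem mem_extremePoints_Ici (m : E) : m ∈ (Set.Ici m).extremePoints 𝕜 := by
  rw [(convex_Ici m).mem_extremePoints_iff_convex_sdiff, Set.Ici_sdiff_left]
  exact ⟨Set.self_mem_Ici, convex_Ioi m⟩

theorem mem_extremePoints_of_isLeast {s : Set E} {m : E} (h : IsLeast s m) :
    m ∈ s.extremePoints 𝕜 :=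
  inter_extremePoints_subset_extremePoints_of_subset h.2 ⟨h.1, mem_extremePoints_Ici m⟩

end OrderedModule

section Polytope

variable {n : ℕ} {P Q : Set (Fin n → ℝ)} {v w : Fin n → ℤ}

theorem strictMono_toLex_embedR :
    StrictMono fun z : Lex (Fin n → ℤ) ↦ toLex (embedR (ofLex z)) :=
  strictMono_toLex_piMap fun _ ↦ Int.cast_strictMono

theorem embedR_add (v w : Fin n → ℤ) : embedR (v + w) = embedR v + embedR w :=
  funext fun i ↦ Int.cast_add (v i) (w i)

theorem IsLexMinExtreme.unique (hv : IsLexMinExtreme P v) (hw : IsLexMinExtreme P w) : v = w :=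
  toLex_inj.1 <| le_antisymm (hv.2 w hw.1) (hw.2 v hv.1)

theorem IsLexMinExtreme.of_isLeast (h : IsLeast (toLex '' P) (toLex (embedR v))) :
    IsLexMinExtreme P v := by
  have hext : toLex (embedR v) ∈ toLex '' P.extremePoints ℝ := by
    have himage := image_extremePoints (𝕜 := ℝ) (toLexLinearEquiv ℝ (Fin n → ℝ)) P
    exact himage ▸ mem_extremePoints_of_isLeast h
  refine ⟨toLex.injective.mem_set_image.1 hext, fun w hw ↦ ?_⟩
  exact strictMono_toLex_embedR.le_iff_le.1 (h.2 (Set.mem_image_of_mem toLex hw.1))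

theorem IsIntegralPolytope.exists_isLeast (hP : IsIntegralPolytope P) :
    ∃ m : Fin n → ℤ, IsLeast (toLex '' P) (toLex (embedR m)) := by
  obtain ⟨S, hS, rfl⟩ := hP
  obtain ⟨m, hmS, hm⟩ := S.exists_min_image toLex hS
  refine ⟨m, ?_⟩
  have hleast : IsLeast (toLex '' (embedR '' (S : Set (Fin n → ℤ)))) (toLex (embedR m)) := by
    refine ⟨⟨_, ⟨m, hmS, rfl⟩, rfl⟩, ?_⟩
    rintro _ ⟨_, ⟨z, hz, rfl⟩, rfl⟩
    exact strictMono_toLex_embedR.monotone (hm z hz)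
  have himage := (toLexLinearEquiv ℝ (Fin n → ℝ)).toLinearMap.image_convexHull (embedR '' ↑S)
  exact himage ▸ isLeast_convexHull hleast

theorem IsIntegralPolytope.exists_isLexMinExtreme (hP : IsIntegralPolytope P) :
    ∃ v, IsLexMinExtreme P v :=
  hP.exists_isLeast.imp fun _ ↦ IsLexMinExtreme.of_isLeast

theorem IsIntegralPolytope.isLexMinExtreme_iff_isLeast (hP : IsIntegralPolytope P) :
    IsLexMinExtreme P v ↔ IsLeast (toLex '' P) (toLex (embedR v)) := by
  refine ⟨fun hv ↦ ?_, .of_isLeast⟩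
  obtain ⟨m, hm⟩ := hP.exists_isLeast
  rwa [hv.unique (.of_isLeast hm)]

theorem IsLexMinExtreme.add (hP : IsIntegralPolytope P) (hQ : IsIntegralPolytope Q)
    (hv : IsLexMinExtreme P v) (hw : IsLexMinExtreme Q w) : IsLexMinExtreme (P + Q) (v + w) := by
  rw [hP.isLexMinExtreme_iff_isLeast] at hv
  rw [hQ.isLexMinExtreme_iff_isLeast] at hw
  apply IsLexMinExtreme.of_isLeast
  have himage : toLex '' (P + Q) = toLex '' P + toLex '' Q := Set.image_add (toLexAddEquiv _)
  rw [himage, embedR_add, toLex_add]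
  exact isLeast_add hv hw

theorem isLexMinExtreme_singleton (h : Fin n → ℤ) : IsLexMinExtreme {embedR h} h :=
  .of_isLeast <| by simp only [Set.image_singleton, isLeast_singleton]

theorem IsIntegralPolytope.exists_extremePoints_subset (hP : IsIntegralPolytope P) :
    ∃ S : Finset (Fin n → ℤ), P.extremePoints ℝ ⊆ embedR '' (S : Set (Fin n → ℤ)) := by
  obtain ⟨S, -, rfl⟩ := hP
  exact ⟨S, extremePoints_convexHull_subset⟩

end Polytope

/-- The extreme points of an integral polytope form a nonempty finite subset of
the lattice `ℤ^n`; sending a polytope `P` to its lexicographically least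
extreme point `m(P)` satisfies `m(P + Q) = m(P) + m(Q)` and `m({h}) = h`. -/
theorem lexMin_extremePoint_additive {n : ℕ} :
    (∀ P : Set (Fin n → ℝ), IsIntegralPolytope P →
        (Set.extremePoints ℝ P).Nonempty ∧ (Set.extremePoints ℝ P).Finite ∧
          ∀ x ∈ Set.extremePoints ℝ P, ∃ z : Fin n → ℤ, x = embedR z) ∧
    (∀ P Q : Set (Fin n → ℝ), IsIntegralPolytope P → IsIntegralPolytope Q →
        ∀ vP vQ vPQ : Fin n → ℤ, IsLexMinExtreme P vP → IsLexMinExtreme Q vQ →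
          IsLexMinExtreme (P + Q) vPQ → vPQ = vP + vQ) ∧
    (∀ h : Fin n → ℤ, IsLexMinExtreme {embedR h} h) := by
  refine ⟨fun P hP ↦ ?_, fun P Q hP hQ vP vQ vPQ hvP hvQ hvPQ ↦ ?_, isLexMinExtreme_singleton⟩
  · obtain ⟨v, hv⟩ := hP.exists_isLexMinExtreme
    obtain ⟨S, hS⟩ := hP.exists_extremePoints_subset
    refine ⟨⟨embedR v, hv.1⟩, (S.finite_toSet.image embedR).subset hS, fun x hx ↦ ?_⟩
    obtain ⟨z, -, hz⟩ := hS hx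
    exact ⟨z, hz.symm⟩
  · exact hvPQ.unique (hvP.add hP hQ hvQ)
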